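/- Lower bound for the first Picard iterate in Fourier–Lebesgue norms: let k ≥ 2 be an integer, s < 0 and 1 ≤ q ≤ ∞. There exist constants c > 0 and δ > 0, depending only on k, s and q, such that for all R > 0, all A ≥ 1, all N with A ≤ δ·N, and all T with 0 < T ≤ δ, one has ‖⟨ξ⟩^s Ξ̂₁(φ̂, 0)(T)‖_{L^q(ℝ)} ≥ c·R^k·T²·A^{k − 1 + 1/q + s}, where φ̂ = R·χ_Ω, the convention 1/q = 0 is used for q = ∞, and Ξ̂₁(φ̂, 0)(T,ξ) = ∫₀ᵀ sin((T−t')λ(ξ))·λ(ξ)·((cos(t'λ(·))·φ̂)^{∗k})(ξ) dt' is the k-fold self-convolution Duhamel term. -/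

import Mathlib

open MeasureTheory Filter
open scoped ENNReal

noncomputable section

/-- The Japanese bracket weight `⟨ξ⟩^s = (1+ξ²)^(s/2)`. -/
def jbw (s ξ : ℝ) : ℝ := (1 + ξ ^ 2) ^ (s / 2)

/-- `λ(ξ) = |ξ|/⟨ξ⟩`. -/
def lam (ξ : ℝ) : ℝ := |ξ| / (1 + ξ ^ 2) ^ ((1 : ℝ) / 2)

/-- The multiplier `m(t,ξ) = sin(tλ(ξ))/λ(ξ)` for `ξ ≠ 0`, `m(t,0) = t`. -/
def mker (t ξ : ℝ) : ℝ := if ξ = 0 then t else Real.sin (t * lam ξ) / lam ξ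

/-- Fourier side linear propagator `Ŝ(t)(v₀,v₁)`. -/
def Shat (t : ℝ) (v₀ v₁ : ℝ → ℂ) (ξ : ℝ) : ℂ :=
  (Real.cos (t * lam ξ) : ℂ) * v₀ ξ + (mker t ξ : ℂ) * v₁ ξ

/-- Convolution of complex valued functions on `ℝ`. -/
def conv (f g : ℝ → ℂ) (ξ : ℝ) : ℂ := ∫ η, f η * g (ξ - η)

/-- Iterated convolution of a list of functions. -/
def convList : List (ℝ → ℂ) → ℝ → ℂ
  | [] => fun _ => 0
  | [f] => f
  | f :: g :: fs => conv f (convList (g :: fs))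

/-- Fourier side Duhamel operator `Î_k`. -/
def Ihat (k : ℕ) (w : Fin k → ℝ → ℝ → ℂ) (t ξ : ℝ) : ℂ :=
  ∫ t' in (0:ℝ)..t,
    ((Real.sin ((t - t') * lam ξ) * lam ξ : ℝ) : ℂ) * convList (List.ofFn fun i => w i t') ξ

/-- Continuity of a curve of functions with respect to the `L¹` norm, on `[0,T]`. -/
def ContinuousL1On (T : ℝ) (v : ℝ → ℝ → ℂ) : Prop :=
  ∀ t₀ ∈ Set.Icc (0 : ℝ) T,
    Tendsto (fun t => eLpNorm (fun ξ => v t ξ - v t₀ ξ) 1 volume)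
      (nhdsWithin t₀ (Set.Icc (0 : ℝ) T)) (nhds 0)

/-- Fourier-side solution of the generalized improved Boussinesq equation with
nonlinearity `u^k` and data `(v₀, v₁)` on `[0, T]`. -/
def IsGIBqSol (k : ℕ) (T : ℝ) (v₀ v₁ : ℝ → ℂ) (v : ℝ → ℝ → ℂ) : Prop :=
  (∀ t ∈ Set.Icc (0 : ℝ) T, Integrable (v t)) ∧
  ContinuousL1On T v ∧
  ∀ t ∈ Set.Icc (0 : ℝ) T,
    ∀ᵐ ξ ∂volume, v t ξ = Shat t v₀ v₁ ξ + Ihat k (fun _ => v) t ξ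

/-- Picard iterates `Ξ̂_j` for gIBq on the Fourier side. -/
def Xi (k : ℕ) (v₀ v₁ : ℝ → ℂ) : ℕ → ℝ → ℝ → ℂ
  | 0 => fun t => Shat t v₀ v₁
  | (j+1) => fun t ξ =>
      ∑ p ∈ (Finset.Nat.antidiagonalTuple k j).attach,
        Ihat k (fun i => Xi k v₀ v₁ (p.1 i)) t ξ
decreasing_by
  have hsum := Finset.Nat.mem_antidiagonalTuple.mp p.2
  have hle : p.1 i ≤ j := by
    calc p.1 i ≤ ∑ i', p.1 i' :=
          Finset.single_le_sum (fun _ _ => Nat.zero_le _) (Finset.mem_univ i)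
      _ = j := hsum
  omega

/-- The `FL^{s,p}` norm on the Fourier side: `‖⟨ξ⟩^s w‖_{L^p}`. -/
def FLnorm (s : ℝ) (p : ℝ≥0∞) (w : ℝ → ℂ) : ℝ≥0∞ :=
  eLpNorm (fun ξ => jbw s ξ * ‖w ξ‖) p volume

end

noncomputable section

/-- The frequency set `Ω = ⋃_{η ∈ {-2N,-N,N,2N}} [η - A/2, η + A/2]`. -/
def Omeg (N A : ℝ) : Set ℝ :=
  ⋃ η ∈ ({-(2 * N), -N, N, 2 * N} : Set ℝ), Set.Icc (η - A / 2) (η + A / 2)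

/-- The Fourier-side perturbation `φ̂ = R·χ_Ω`. -/
def phihat (R N A : ℝ) : ℝ → ℂ := Set.indicator (Omeg N A) fun _ => (R : ℂ)

end

/-- Real version of the linear evolution. -/
noncomputable def wR (R N A : ℝ) (t ξ : ℝ) : ℝ :=
  Real.cos (t * lam ξ) * Set.indicator (Omeg N A) (fun _ => R) ξ

/-- Real version of the iterated convolution. -/
noncomputable def GR (R N A : ℝ) : ℕ → ℝ → ℝ → ℝ
  | 0 => wR R N A
  | (n+1) => fun t ξ => ∫ η, wR R N A t η * GR R N A n t (ξ - η)

theorem Shat_eq (R N A t ξ : ℝ) :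
    Shat t (phihat R N A) 0 ξ = ((wR R N A t ξ : ℝ) : ℂ) := by
  unfold Shat phihat wR
  by_cases h : ξ ∈ Omeg N A <;> simp [h]

theorem convList_eq (R N A t : ℝ) (n : ℕ) (ξ : ℝ) :
    convList (List.replicate (n+1) (Shat t (phihat R N A) 0)) ξ = ((GR R N A n t ξ : ℝ) : ℂ) := by
  induction n generalizing ξ with
  | zero => simpa [convList, GR] using Shat_eq R N A t ξ
  | succ n ih =>
    rw [List.replicate_succ, List.replicate_succ]
    show conv _ (convList (List.replicate (n+1) _)) ξ = _
    unfold conv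
    simp only [ih, Shat_eq, GR]
    rw [← integral_complex_ofReal]
    simp

theorem lam_nonneg (ξ : ℝ) : 0 ≤ lam ξ := by unfold lam; positivity

theorem lam_le_one (ξ : ℝ) : lam ξ ≤ 1 := by
  unfold lam
  rw [← Real.sqrt_eq_rpow]
  apply div_le_one_of_le₀ _ (Real.sqrt_nonneg _)
  apply Real.abs_le_sqrt; linarith

theorem lam_meas : Measurable lam := by unfold lam; fun_prop

theorem Omeg_meas (N A : ℝ) : MeasurableSet (Omeg N A) := by
  unfold Omeg
  apply MeasurableSet.biUnion
  · exact Set.Finite.countable (by simp)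
  · intro b _; exact measurableSet_Icc

theorem Omeg_fin (N A : ℝ) : volume (Omeg N A) < ⊤ := by
  unfold Omeg
  apply measure_biUnion_lt_top
  · simp
  · intro b _; simp

theorem wR_meas (R N A : ℝ) : Measurable (Function.uncurry (wR R N A)) := by
  have h : Measurable (Set.indicator (Omeg N A) (fun _ => R)) :=
    measurable_const.indicator (Omeg_meas N A)
  have := lam_meas
  unfold wR Function.uncurry
  fun_prop

theorem wR_abs (R N A t ξ : ℝ) : |wR R N A t ξ| ≤ Set.indicator (Omeg N A) (fun _ => |R|) ξ := by
  unfold wR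
  by_cases h : ξ ∈ Omeg N A
  · simp only [h, Set.indicator_of_mem, abs_mul]
    exact mul_le_of_le_one_left (abs_nonneg _) (Real.abs_cos_le_one _)
  · simp [h]

theorem ind_int (R N A : ℝ) : Integrable (Set.indicator (Omeg N A) (fun _ => |R|)) := by
  rw [integrable_indicator_iff (Omeg_meas N A)]
  exact integrableOn_const (Omeg_fin N A).ne

theorem wR_int (R N A t : ℝ) : Integrable (wR R N A t) := by
  apply (ind_int R N A).mono' ((wR_meas R N A).comp (measurable_const.prodMk measurable_id)).aestronglyMeasurable
  exact Filter.Eventually.of_forall fun ξ => wR_abs R N A t ξ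

theorem GR_prop (R N A : ℝ) (n : ℕ) : Measurable (Function.uncurry (GR R N A n)) ∧
    ∃ C, 0 ≤ C ∧ ∀ t ξ, |GR R N A n t ξ| ≤ C := by
  induction n with
  | zero =>
    refine ⟨wR_meas R N A, |R|, abs_nonneg _, fun t ξ => (wR_abs R N A t ξ).trans ?_⟩
    exact Set.indicator_le_self' (fun _ _ => abs_nonneg _) ξ
  | succ n ih =>
    obtain ⟨hm, C, hC, hb⟩ := ih
    constructor
    · have h1 : Measurable (fun p : (ℝ × ℝ) × ℝ => wR R N A p.1.1 p.2 * GR R N A n p.1.1 (p.1.2 - p.2)) := by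
        apply Measurable.mul
        · exact (wR_meas R N A).comp (f := fun p : (ℝ × ℝ) × ℝ => (p.1.1, p.2)) (by fun_prop)
        · exact hm.comp (f := fun p : (ℝ × ℝ) × ℝ => (p.1.1, p.1.2 - p.2)) (by fun_prop)
      exact (h1.stronglyMeasurable.integral_prod_right (ν := volume)).measurable
    · refine ⟨∫ η, Set.indicator (Omeg N A) (fun _ => |R|) η * C, ?_, ?_⟩
      · exact integral_nonneg fun η => mul_nonneg
          (Set.indicator_nonneg (fun _ _ => abs_nonneg _) η) hC
      · intro t ξ
        show ‖∫ η, wR R N A t η * GR R N A n t (ξ - η)‖ ≤ _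
        apply norm_integral_le_of_norm_le ((ind_int R N A).mul_const C)
        refine Filter.Eventually.of_forall fun η => ?_
        rw [norm_mul]
        exact mul_le_mul (wR_abs R N A t η) (hb _ _) (norm_nonneg _)
          (Set.indicator_nonneg (fun _ _ => abs_nonneg _) η)

theorem GR_int (R N A t ξ : ℝ) (n : ℕ) :
    Integrable (fun η => wR R N A t η * GR R N A n t (ξ - η)) := by
  obtain ⟨hm, C, hC, hb⟩ := GR_prop R N A n
  apply (wR_int R N A t).mul_bdd (c := C)
  · exact (hm.comp (f := fun η : ℝ => (t, ξ - η)) (by fun_prop)).aestronglyMeasurable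
  · exact Filter.Eventually.of_forall fun η => hb _ _

theorem cos_low {t : ℝ} (h0 : 0 ≤ t) (h1 : t ≤ 1) (ξ : ℝ) : 1/2 ≤ Real.cos (t * lam ξ) := by
  have h2 := lam_nonneg ξ
  have h3 := lam_le_one ξ
  have h4 : 0 ≤ t * lam ξ := mul_nonneg h0 h2
  have h5 : t * lam ξ ≤ 1 := mul_le_one₀ h1 h2 h3
  have := Real.one_sub_sq_div_two_le_cos (x := t * lam ξ)
  nlinarith

theorem wR_nonneg {R : ℝ} (hR : 0 < R) (N A : ℝ) {t : ℝ} (h0 : 0 ≤ t) (h1 : t ≤ 1) (ξ : ℝ) :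
    0 ≤ wR R N A t ξ := by
  have := cos_low h0 h1 ξ
  exact mul_nonneg (by linarith) (Set.indicator_nonneg (fun _ _ => hR.le) ξ)

theorem GR_nonneg {R : ℝ} (hR : 0 < R) (N A : ℝ) {t : ℝ} (h0 : 0 ≤ t) (h1 : t ≤ 1) (n : ℕ) (ξ : ℝ) :
    0 ≤ GR R N A n t ξ := by
  induction n generalizing ξ with
  | zero => exact wR_nonneg hR N A h0 h1 ξ
  | succ n ih => exact integral_nonneg fun η => mul_nonneg (wR_nonneg hR N A h0 h1 η) (ih _)

theorem wR_low {R : ℝ} (hR : 0 < R) (N A : ℝ) {t : ℝ} (h0 : 0 ≤ t) (h1 : t ≤ 1) {ζ : ℝ}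
    (hζ : ζ ∈ ({-(2 * N), -N, N, 2 * N} : Set ℝ)) {ξ : ℝ} (hξ : |ξ - ζ| ≤ A / 2) :
    R / 2 ≤ wR R N A t ξ := by
  have hm : ξ ∈ Omeg N A := by
    unfold Omeg
    rw [abs_le] at hξ
    refine Set.mem_biUnion hζ ⟨?_, ?_⟩ <;> linarith
  have := cos_low h0 h1 ξ
  simp only [wR, hm, Set.indicator_of_mem]
  nlinarith

/-- The lower-bound predicate. -/
def Low (R N A t : ℝ) (n : ℕ) (ζ : ℝ) : Prop :=
  ∀ ξ, |ξ - ζ| ≤ A / 2 → (R/2)^(n+1) * (A/2)^n ≤ GR R N A n t ξ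

theorem Low_zero {R : ℝ} (hR : 0 < R) (N A : ℝ) {t : ℝ} (h0 : 0 ≤ t) (h1 : t ≤ 1) {ζ : ℝ}
    (hζ : ζ ∈ ({-(2 * N), -N, N, 2 * N} : Set ℝ)) : Low R N A t 0 ζ := by
  intro ξ hξ
  simpa [GR] using wR_low hR N A h0 h1 hζ hξ

theorem Low_succ {R : ℝ} (hR : 0 < R) (N : ℝ) {A : ℝ} (hA : 0 < A) {t : ℝ} (h0 : 0 ≤ t)
    (h1 : t ≤ 1) {ζ : ℝ}
    (hζ : ζ ∈ ({-(2 * N), -N, N, 2 * N} : Set ℝ)) {n : ℕ} {ζ' : ℝ} (hL : Low R N A t n ζ')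
    (ζ'' : ℝ) (he : ζ'' = ζ + ζ') :
    Low R N A t (n+1) ζ'' := by
  intro ξ hξ
  rw [he, abs_le] at hξ
  set a := max (ζ - A/2) (ξ - ζ' - A/2) with ha
  set b := min (ζ + A/2) (ξ - ζ' + A/2) with hb
  have hab : A / 2 ≤ b - a := by
    rw [ha, hb]
    rcases max_cases (ζ - A/2) (ξ - ζ' - A/2) with h | h <;>
    rcases min_cases (ζ + A/2) (ξ - ζ' + A/2) with h' | h' <;> linarith
  set c := (R/2) * ((R/2)^(n+1) * (A/2)^n) with hc
  have hc0 : 0 ≤ c := by positivity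
  have key : ∫ η, Set.indicator (Set.Icc a b) (fun _ => c) η ≤ GR R N A (n+1) t ξ := by
    apply integral_mono
    · rw [integrable_indicator_iff measurableSet_Icc]
      exact integrableOn_const (by simp)
    · exact GR_int R N A t ξ n
    · intro η
      by_cases hη : η ∈ Set.Icc a b
      · simp only [hη, Set.indicator_of_mem]
        obtain ⟨h2, h3⟩ := hη
        rw [ha, max_le_iff] at h2
        rw [hb, le_min_iff] at h3
        apply mul_le_mul
        · exact wR_low hR N A h0 h1 hζ (by rw [abs_le]; constructor <;> linarith)
        · exact hL _ (by rw [abs_le]; constructor <;> linarith)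
        · positivity
        · exact wR_nonneg hR N A h0 h1 η
      · simp only [hη, not_false_eq_true, Set.indicator_of_notMem]
        exact mul_nonneg (wR_nonneg hR N A h0 h1 η) (GR_nonneg hR N A h0 h1 n _)
  refine le_trans ?_ key
  rw [integral_indicator measurableSet_Icc, setIntegral_const, Real.volume_real_Icc_of_le (by linarith)]
  simp only [smul_eq_mul]
  calc (R/2)^(n+1+1) * (A/2)^(n+1) = (A/2) * c := by rw [hc]; ring
    _ ≤ _ := mul_le_mul_of_nonneg_right hab hc0

theorem Low_all {R : ℝ} (hR : 0 < R) (N : ℝ) {A : ℝ} (hA : 0 < A) {t : ℝ} (h0 : 0 ≤ t)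
    (h1 : t ≤ 1) (m : ℕ) : Low R N A t (m+1) 0 := by
  induction m using Nat.twoStepInduction with
  | zero =>
    exact Low_succ hR N hA h0 h1 (ζ := -N) (by simp)
      (Low_zero hR N A h0 h1 (ζ := N) (by simp)) 0 (by ring)
  | one =>
    refine Low_succ hR N hA h0 h1 (ζ := -(2*N)) (ζ' := 2*N) (by simp) ?_ 0 (by ring)
    exact Low_succ hR N hA h0 h1 (ζ := N) (by simp)
      (Low_zero hR N A h0 h1 (ζ := N) (by simp)) _ (by ring)
  | more m ih _ =>
    refine Low_succ hR N hA h0 h1 (ζ := -N) (ζ' := N) (by simp) ?_ 0 (by ring)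
    exact Low_succ hR N hA h0 h1 (ζ := N) (by simp) ih _ (by ring)

theorem Xi_one (k : ℕ) (v₀ v₁ : ℝ → ℂ) (T ξ : ℝ) :
    Xi k v₀ v₁ 1 T ξ = Ihat k (fun _ t => Shat t v₀ v₁) T ξ := by
  have h0 : ∀ f : Fin k → ℕ, (∀ i, f i = 0) →
      Ihat k (fun i => Xi k v₀ v₁ (f i)) T ξ = Ihat k (fun _ t => Shat t v₀ v₁) T ξ := by
    intro f hf
    have : (fun i => Xi k v₀ v₁ (f i)) = (fun _ t => Shat t v₀ v₁) := by
      funext i; rw [hf i, Xi]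
    rw [this]
  rw [Xi]
  beta_reduce
  rw [Finset.sum_attach (Finset.Nat.antidiagonalTuple k 0)
    (fun p => Ihat k (fun i => Xi k v₀ v₁ (p i)) T ξ)]
  rw [Finset.Nat.antidiagonalTuple_zero_right, Finset.sum_singleton]
  exact h0 _ (fun i => rfl)

theorem lam_low {ξ : ℝ} (h : 1/4 ≤ ξ) : 1/5 ≤ lam ξ := by
  unfold lam
  rw [← Real.sqrt_eq_rpow, abs_of_nonneg (by linarith), le_div_iff₀ (Real.sqrt_pos.2 (by positivity))]
  have : √(1 + ξ^2) ≤ 5 * ξ := by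
    apply Real.sqrt_le_iff.2 ⟨by linarith, by nlinarith⟩
  linarith

theorem sin_low {x : ℝ} (h0 : 0 ≤ x) (h1 : x ≤ 1) : x / 2 ≤ Real.sin x := by
  rcases h0.eq_or_lt with h | h
  · simp [← h]
  · have := Real.sin_gt_sub_cube h
    have h2 : x ^ 2 ≤ 1 := pow_le_one₀ h0 h1
    nlinarith [mul_nonneg h0 (sub_nonneg.2 h2)]

theorem Xi_low (m : ℕ) {R N A T : ℝ} (hR : 0 < R) (hA : 1 ≤ A) (hT : 0 < T) (hT1 : T ≤ 1)
    {ξ : ℝ} (hξ : ξ ∈ Set.Icc (A/4) (A/2)) :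
    T^2/100 * ((R/2)^(m+2) * (A/2)^(m+1)) ≤ ‖Xi (m+2) (phihat R N A) 0 1 T ξ‖ := by
  set B := (R/2)^(m+2) * (A/2)^(m+1) with hB
  have hB0 : 0 ≤ B := by positivity
  have hl := lam_low (ξ := ξ) (by linarith [hξ.1])
  have hl1 := lam_le_one ξ
  have e : Xi (m+2) (phihat R N A) 0 1 T ξ =
      ((∫ t in (0:ℝ)..T, Real.sin ((T - t) * lam ξ) * lam ξ * GR R N A (m+1) t ξ : ℝ) : ℂ) := by
    rw [Xi_one, Ihat, ← intervalIntegral.integral_ofReal]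
    simp only [List.ofFn_const, convList_eq]
    simp
  rw [e, Complex.norm_real]
  refine le_trans ?_ (le_abs_self _)
  obtain ⟨hm, C, hC, hb⟩ := GR_prop R N A (m+1)
  have hint : IntervalIntegrable (fun t => Real.sin ((T - t) * lam ξ) * lam ξ * GR R N A (m+1) t ξ)
      volume 0 T := by
    rw [intervalIntegrable_iff]
    apply Measure.integrableOn_of_bounded (M := C) (by simp)
    · apply Measurable.aestronglyMeasurable
      apply Measurable.mul (by fun_prop)
      exact hm.comp (f := fun t : ℝ => (t, ξ)) (by fun_prop)
    · refine Filter.Eventually.of_forall fun t => ?_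
      rw [norm_mul, norm_mul]
      have a1 : ‖Real.sin ((T - t) * lam ξ)‖ ≤ 1 := Real.abs_sin_le_one _
      have a2 : ‖lam ξ‖ ≤ 1 := by rw [Real.norm_of_nonneg (by linarith)]; exact hl1
      have a3 : ‖GR R N A (m+1) t ξ‖ ≤ C := hb t ξ
      calc _ ≤ 1 * 1 * C := by gcongr
        _ = C := by ring
  have hmono : ∫ t in (0:ℝ)..T, (T - t) * (B / 50) ≤
      ∫ t in (0:ℝ)..T, Real.sin ((T - t) * lam ξ) * lam ξ * GR R N A (m+1) t ξ := by
    apply intervalIntegral.integral_mono_on hT.le _ hint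
    · intro t ht
      have hG : B ≤ GR R N A (m+1) t ξ :=
        Low_all hR N (by linarith) ht.1 (ht.2.trans hT1) m ξ
          (by rw [abs_le]; constructor <;> linarith [hξ.1, hξ.2])
      have hTt : 0 ≤ T - t := by linarith [ht.2]
      have hs := sin_low (x := (T - t) * lam ξ) (by positivity)
        (mul_le_one₀ (by linarith [ht.1]) (by linarith) hl1)
      have h1 : (T - t) / 50 ≤ Real.sin ((T - t) * lam ξ) * lam ξ := by
        have : (T - t) / 10 ≤ Real.sin ((T - t) * lam ξ) := by nlinarith
        calc (T - t)/50 = (T-t)/10 * (1/5) := by ring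
          _ ≤ _ := by apply mul_le_mul this hl (by norm_num); linarith [div_nonneg hTt (by norm_num : (0:ℝ) ≤ 10)]
      calc (T - t) * (B / 50) = (T - t) / 50 * B := by ring
        _ ≤ _ := mul_le_mul h1 hG hB0 ((by positivity : 0 ≤ (T-t)/50).trans h1)
    · apply Continuous.intervalIntegrable; fun_prop
  refine le_trans (le_of_eq ?_) hmono
  rw [intervalIntegral.integral_mul_const, intervalIntegral.integral_sub (by simp) (by simp)]
  simp
  ring

/-- Lower bound for the first Picard iterate in Fourier–Lebesgue norms:
`‖⟨ξ⟩^s Ξ̂₁(φ̂, 0)(T)‖_{L^q} ≥ c·R^k·T²·A^{k - 1 + 1/q + s}`, with the convention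
`1/q = 0` for `q = ∞` (note `(⊤ : ℝ≥0∞).toReal = 0`). -/
theorem first_picard_lower_bound_FourierLebesgue
    (k : ℕ) (hk : 2 ≤ k) (s : ℝ) (hs : s < 0) (q : ℝ≥0∞) (hq : 1 ≤ q) :
    ∃ c δ : ℝ, 0 < c ∧ 0 < δ ∧
      ∀ R A N T : ℝ, 0 < R → 1 ≤ A → A ≤ δ * N → 0 < T → T ≤ δ →
        ENNReal.ofReal (c * R ^ k * T ^ 2 * A ^ ((k : ℝ) - 1 + 1 / q.toReal + s)) ≤
          FLnorm s q (Xi k (phihat R N A) 0 1 T) := by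
  obtain ⟨m, rfl⟩ : ∃ m, k = m + 2 := ⟨k - 2, by omega⟩
  refine ⟨2^(s/2) / 100 * (1/2)^(m+2) * (1/2)^(m+1) * (1/4 : ℝ)^(1/q.toReal), 1, by positivity,
    one_pos, ?_⟩
  intro R A N T hR hA _ hT hT1
  have hA0 : 0 < A := by linarith
  set c0 := 2^(s/2) * A^s * (T^2/100 * ((R/2)^(m+2) * (A/2)^(m+1))) with hc0
  have hc : 0 ≤ c0 := by positivity
  have h1 : eLpNorm (Set.indicator (Set.Icc (A/4) (A/2)) (fun _ => c0)) q volume ≤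
      FLnorm s q (Xi (m+2) (phihat R N A) 0 1 T) := by
    unfold FLnorm
    apply eLpNorm_mono_real
    intro ξ
    have hj : 0 ≤ jbw s ξ := by unfold jbw; positivity
    by_cases hξ : ξ ∈ Set.Icc (A/4) (A/2)
    · simp only [hξ, Set.indicator_of_mem]
      rw [Real.norm_of_nonneg hc, hc0]
      apply mul_le_mul _ (Xi_low m hR hA hT hT1 hξ) (by positivity) hj
      have e : (2:ℝ)^(s/2) * A^s = (2 * A^2)^(s/2) := by
        rw [Real.mul_rpow (by norm_num) (by positivity), ← Real.rpow_natCast A 2,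
          ← Real.rpow_mul hA0.le]
        congr 2; push_cast; ring
      rw [e]
      unfold jbw
      apply Real.rpow_le_rpow_of_nonpos (by positivity) _ (by linarith)
      nlinarith [hξ.1, hξ.2]
    · simp only [hξ, not_false_eq_true, Set.indicator_of_notMem, norm_zero]
      positivity
  refine le_trans (le_of_eq ?_) h1
  have hv : volume (Set.Icc (A/4) (A/2)) = ENNReal.ofReal (A/4) := by
    rw [Real.volume_Icc]; congr 1; ring
  rw [eLpNorm_indicator_const' measurableSet_Icc (by rw [hv]; simp; linarith)
    (by intro h; simp [h] at hq), hv, Real.enorm_of_nonneg hc,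
    ENNReal.ofReal_rpow_of_pos (by positivity), ← ENNReal.ofReal_mul hc]
  congr 1
  have e1 : A ^ (((m+2 : ℕ) : ℝ) - 1 + 1 / q.toReal + s) = A^(m+1) * A^(1/q.toReal) * A^s := by
    rw [Real.rpow_add hA0, Real.rpow_add hA0, ← Real.rpow_natCast A (m+1)]
    congr 3; push_cast; ring
  have e2 : (A/4)^(1/q.toReal) = A^(1/q.toReal) * (1/4)^(1/q.toReal) := by
    rw [← Real.mul_rpow hA0.le (by norm_num)]; congr 1; ring
  rw [e1, e2, hc0, div_pow, div_pow, div_pow, div_pow]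
  ring
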